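/- arXiv:1410.0308 — 3 statements merged into one kernel-verified Lean document; each statement's English description precedes it below -/
import Mathlib

section
/- Let c₁, c₂ ≥ 2 be natural numbers and let u'₊, u'₀, u'₋, u''₊, u''₀, u''₋ be integers. With P and Q the truncated Kauffman polynomials in ℤ[a,a⁻¹][z] defined by P = u'₊·a²·z^(c₁−2) + a·z^(c₁−1) + u'₀·z^(c₁−2) + a⁻¹·z^(c₁−1) + u'₋·a⁻²·z^(c₁−2) and Q = u''₊·a²·z^(c₂−2) + a·z^(c₂−1) + u''₀·z^(c₂−2) + a⁻¹·z^(c₂−1) + u''₋·a⁻²·z^(c₂−2), the degree of P·Q in z is exactly c₁ + c₂ − 2, with leading coefficient a² + 2 + a⁻² ∈ ℤ[a,a⁻¹]. (This is the paper's claim that if a connected sum of two reduced alternating diagrams has c = c₁ + c₂ crossings, then the highest z-degree of its Λ̃-invariant is c − 2, one lower than the z-degree c − 1 attained by prime alternating diagrams.) -/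
open Polynomial LaurentPolynomial

section LeadingTerm

variable {S : Type*} [Semiring S] {s : S} {n : ℕ} {q : S[X]}

theorem degree_C_mul_X_pow_lt {m : ℕ} (hmn : m < n) (s : S) :
    (Polynomial.C s * X ^ m).degree < (n : WithBot ℕ) :=
  (degree_C_mul_X_pow_le m s).trans_lt (Nat.cast_lt.mpr hmn)

theorem degree_C_mul_X_pow_add (hs : s ≠ 0) (hq : q.degree < n) :
    (Polynomial.C s * X ^ n + q).degree = (n : WithBot ℕ) := by
  have hdeg : (Polynomial.C s * X ^ n).degree = (n : WithBot ℕ) := degree_C_mul_X_pow n hs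
  rw [degree_add_eq_left_of_degree_lt (hq.trans_eq hdeg.symm), hdeg]

theorem leadingCoeff_C_mul_X_pow_add (hs : s ≠ 0) (hq : q.degree < n) :
    (Polynomial.C s * X ^ n + q).leadingCoeff = s := by
  have hdeg : (Polynomial.C s * X ^ n).degree = (n : WithBot ℕ) := degree_C_mul_X_pow n hs
  rw [leadingCoeff_add_of_degree_lt' (hq.trans_eq hdeg.symm), leadingCoeff_C_mul_X_pow]

end LeadingTerm

section TruncatedKauffman

variable {R : Type*} [Semiring R]

theorem T_add_T_neg_mul_self (n : ℤ) :
    (T n + T (-n) : R[T;T⁻¹]) * (T n + T (-n)) = T (2 * n) + 2 + T (-(2 * n)) := by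
  calc (T n + T (-n) : R[T;T⁻¹]) * (T n + T (-n))
      = T (n + n) + T (-n + n) + (T (n + -n) + T (-n + -n)) := by
        simp only [add_mul, mul_add, T_add]
    _ = T (2 * n) + (1 + 1) + T (-(2 * n)) := by
        rw [neg_add_cancel, add_neg_cancel, T_zero, ← neg_add, ← two_mul]
        simp only [add_assoc]
    _ = T (2 * n) + 2 + T (-(2 * n)) := by rw [one_add_one_eq_two]

theorem T_add_two_add_T_neg_ne_zero [Nontrivial R] {n : ℤ} (hn : n ≠ 0) :
    (T n + 2 + T (-n) : R[T;T⁻¹]) ≠ 0 := by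
  have hneg : -n ≠ n := by lia
  have hcoeff : (T n + (T 0 + T 0) + T (-n) : R[T;T⁻¹]).coeff n = 1 := by
    simp [-T_zero, hn.symm, hneg]
  rw [← one_add_one_eq_two, ← T_zero]
  intro hzero
  rw [hzero] at hcoeff
  simp at hcoeff

theorem T_add_T_neg_ne_zero [Nontrivial R] {n : ℤ} (hn : n ≠ 0) :
    (T n + T (-n) : R[T;T⁻¹]) ≠ 0 := by
  intro hzero
  apply T_add_two_add_T_neg_ne_zero (R := R) (mul_ne_zero two_ne_zero hn)
  rw [← T_add_T_neg_mul_self, hzero, zero_mul]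

/-- The part in `z`-degrees `c - 1` and `c - 2` of the Kauffman invariant `Λ̃` of a reduced
alternating diagram with `c` crossings. The Laurent variable `T` is `a`, the polynomial variable `X`
is `z`, and `u` is the whole coefficient of `z ^ (c - 2)`, which for a diagram has the form
`u₊ a² + u₀ + u₋ a⁻²`. The subtractions are truncated; the intended range is `2 ≤ c`. -/
noncomputable def truncatedKauffman (c : ℕ) (u : R[T;T⁻¹]) : R[T;T⁻¹][X] :=
  Polynomial.C (T 1 + T (-1)) * X ^ (c - 1) + Polynomial.C u * X ^ (c - 2)

theorem truncatedKauffman_add_add (c : ℕ) (u₁ u₂ u₃ : R[T;T⁻¹]) :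
    truncatedKauffman c (u₁ + u₂ + u₃) =
      Polynomial.C u₁ * X ^ (c - 2) + Polynomial.C (T 1) * X ^ (c - 1)
        + Polynomial.C u₂ * X ^ (c - 2) + Polynomial.C (T (-1)) * X ^ (c - 1)
        + Polynomial.C u₃ * X ^ (c - 2) := by
  simp only [truncatedKauffman, Polynomial.C_add, add_mul]
  abel

variable [Nontrivial R]

theorem degree_truncatedKauffman {c : ℕ} (hc : 2 ≤ c) (u : R[T;T⁻¹]) :
    (truncatedKauffman c u).degree = (c - 1 : ℕ) :=
  degree_C_mul_X_pow_add (T_add_T_neg_ne_zero one_ne_zero)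
    (degree_C_mul_X_pow_lt (by lia) u)

theorem leadingCoeff_truncatedKauffman {c : ℕ} (hc : 2 ≤ c) (u : R[T;T⁻¹]) :
    (truncatedKauffman c u).leadingCoeff = T 1 + T (-1) :=
  leadingCoeff_C_mul_X_pow_add (T_add_T_neg_ne_zero one_ne_zero)
    (degree_C_mul_X_pow_lt (by lia) u)

theorem connectedSum_degree_general {c₁ c₂ : ℕ} (hc₁ : 2 ≤ c₁) (hc₂ : 2 ≤ c₂) (u v : R[T;T⁻¹]) :
    (truncatedKauffman c₁ u * truncatedKauffman c₂ v).degree = (c₁ + c₂ - 2 : ℕ) ∧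
    (truncatedKauffman c₁ u * truncatedKauffman c₂ v).leadingCoeff = T 2 + 2 + T (-2) := by
  have hlead : (truncatedKauffman c₁ u).leadingCoeff * (truncatedKauffman c₂ v).leadingCoeff
      = T 2 + 2 + T (-2) := by
    rw [leadingCoeff_truncatedKauffman hc₁, leadingCoeff_truncatedKauffman hc₂]
    exact T_add_T_neg_mul_self 1
  have hlead_ne_zero :
      (truncatedKauffman c₁ u).leadingCoeff * (truncatedKauffman c₂ v).leadingCoeff ≠ 0 :=
    hlead ▸ T_add_two_add_T_neg_ne_zero two_ne_zero
  constructor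
  · rw [degree_mul' hlead_ne_zero, degree_truncatedKauffman hc₁, degree_truncatedKauffman hc₂]
    norm_cast
    lia
  · rw [leadingCoeff_mul' hlead_ne_zero, hlead]

end TruncatedKauffman

/-- The Λ̃-invariant of a connected sum of two reduced alternating diagrams with
`c₁` and `c₂` crossings has `z`-degree exactly `c₁ + c₂ - 2`, with leading
coefficient `a² + 2 + a⁻²`. -/
theorem connectedSum_degree (c₁ c₂ : ℕ) (hc₁ : 2 ≤ c₁) (hc₂ : 2 ≤ c₂)
    (u'p u'0 u'm u''p u''0 u''m : ℤ)
    (P Q : Polynomial (LaurentPolynomial ℤ))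
    (hP : P = Polynomial.C ((u'p : LaurentPolynomial ℤ) * T 2) * X ^ (c₁ - 2)
        + Polynomial.C (T 1) * X ^ (c₁ - 1)
        + Polynomial.C ((u'0 : LaurentPolynomial ℤ)) * X ^ (c₁ - 2)
        + Polynomial.C (T (-1)) * X ^ (c₁ - 1)
        + Polynomial.C ((u'm : LaurentPolynomial ℤ) * T (-2)) * X ^ (c₁ - 2))
    (hQ : Q = Polynomial.C ((u''p : LaurentPolynomial ℤ) * T 2) * X ^ (c₂ - 2)
        + Polynomial.C (T 1) * X ^ (c₂ - 1)
        + Polynomial.C ((u''0 : LaurentPolynomial ℤ)) * X ^ (c₂ - 2)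
        + Polynomial.C (T (-1)) * X ^ (c₂ - 1)
        + Polynomial.C ((u''m : LaurentPolynomial ℤ) * T (-2)) * X ^ (c₂ - 2)) :
    (P * Q).degree = ((c₁ + c₂ - 2 : ℕ) : WithBot ℕ) ∧
    (P * Q).leadingCoeff = T 2 + 2 + T (-2) := by
  rw [hP, hQ, ← truncatedKauffman_add_add, ← truncatedKauffman_add_add]
  exact connectedSum_degree_general hc₁ hc₂ _ _
end

section
/- Let n ≥ 1 be an odd natural number and c ≥ 3 a natural number. Then the truncated Kauffman polynomial Λ̃(n,c) ∈ ℤ[a,a⁻¹][z] is not fixed by the involution a ↔ a⁻¹; that is, if inv : ℤ[a,a⁻¹] → ℤ[a,a⁻¹] is the ring automorphism sending a to a⁻¹ (Mathlib's LaurentPolynomial.invert) and we apply it coefficientwise to polynomials in z via Polynomial.map, then Polynomial.map inv (Λ̃(n,c)) ≠ Λ̃(n,c). (This is the content of the paper's Corollary: for a rational tangle T in standard format with an odd number of twist sites, u₊ = u₋ + 1, so Λ̃ lacks the symmetry under a ↔ a⁻¹ required of an amphicheiral knot or link; hence N(T) cannot be amphicheiral.) -/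
open Polynomial LaurentPolynomial

/-- The truncated Kauffman polynomial Λ̃(n,c) in ℤ[a,a⁻¹][z], where `a = T 1` is the
Laurent variable and `z = X` is the polynomial variable. -/
noncomputable def LamTilde (n c : ℕ) : Polynomial (LaurentPolynomial ℤ) :=
    Polynomial.C ((((n + 1) / 2 : ℕ) : LaurentPolynomial ℤ) * T 2) * X ^ (c - 2)
  + Polynomial.C (T 1) * X ^ (c - 1)
  + Polynomial.C ((n : ℕ) : LaurentPolynomial ℤ) * X ^ (c - 2)
  + Polynomial.C (T (-1)) * X ^ (c - 1)
  + Polynomial.C (((n / 2 : ℕ) : LaurentPolynomial ℤ) * T (-2)) * X ^ (c - 2)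

theorem map_invert_eq_self_iff {R : Type*} [CommSemiring R] {p : R[T;T⁻¹][X]} :
    p.map (LaurentPolynomial.invert (R := R)).toRingEquiv.toRingHom = p ↔
      ∀ k i, (p.coeff k).coeff (-i) = (p.coeff k).coeff i := by
  rw [Polynomial.ext_iff]
  refine forall_congr' fun k ↦ ?_
  rw [Polynomial.coeff_map, LaurentPolynomial.ext_iff]
  exact forall_congr' fun i ↦ by rw [← invert_apply]; rfl

theorem coeff_natCast_mul_T {R : Type*} [Semiring R] (m : ℕ) (k i : ℤ) :
    ((m : R[T;T⁻¹]) * T k).coeff i = if k = i then (m : R) else 0 := by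
  rw [← map_natCast LaurentPolynomial.C m, ← single_eq_C_mul_T, AddMonoidAlgebra.coeff_single,
    Finsupp.single_apply]

section LamTilde

variable {c : ℕ} (n : ℕ)

theorem lamTilde_coeff_sub_two (hc : 2 ≤ c) :
    (LamTilde n c).coeff (c - 2) =
      ((n + 1) / 2 : ℕ) * T (R := ℤ) 2 + n + (n / 2 : ℕ) * T (R := ℤ) (-2) := by
  have hne : c - 2 ≠ c - 1 := by omega
  simp only [LamTilde, Polynomial.coeff_add, Polynomial.coeff_C_mul_X_pow, hne, if_true, if_false,
    add_zero]

theorem lamTilde_coeff_sub_two_coeff_two (hc : 2 ≤ c) :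
    ((LamTilde n c).coeff (c - 2)).coeff 2 = ((n + 1) / 2 : ℕ) := by
  rw [lamTilde_coeff_sub_two n hc]
  simp [coeff_natCast_mul_T, AddMonoidAlgebra.coeff_natCast]

theorem lamTilde_coeff_sub_two_coeff_neg_two (hc : 2 ≤ c) :
    ((LamTilde n c).coeff (c - 2)).coeff (-2) = (n / 2 : ℕ) := by
  rw [lamTilde_coeff_sub_two n hc]
  simp [coeff_natCast_mul_T, AddMonoidAlgebra.coeff_natCast]

end LamTilde

/-- For an odd number `n` of twist sites, Λ̃(n,c) is not symmetric under `a ↔ a⁻¹`;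
hence the corresponding rational knot or link cannot be amphicheiral. -/
theorem lamTilde_odd_not_amphicheiral (n c : ℕ) (hn : 1 ≤ n) (hodd : Odd n) (hc : 3 ≤ c) :
    Polynomial.map (LaurentPolynomial.invert (R := ℤ)).toRingEquiv.toRingHom (LamTilde n c)
      ≠ LamTilde n c := by
  intro hsymm
  have hc_two : 2 ≤ c := by omega
  have hcoeff : ((n / 2 : ℕ) : ℤ) = ((n + 1) / 2 : ℕ) := by
    rw [← lamTilde_coeff_sub_two_coeff_neg_two n hc_two,
      ← lamTilde_coeff_sub_two_coeff_two n hc_two]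
    exact map_invert_eq_self_iff.mp hsymm (c - 2) 2
  have hceil : (n + 1) / 2 = n / 2 + 1 := by
    obtain ⟨k, rfl⟩ := hodd
    omega
  omega
end

section
/- Define a sequence M : ℕ → ℤ[a,a⁻¹][z] by M(2) = Λ̃(2,4) (the figure-eight datum), M(3) = Λ̃(3,5) (the datum for N(212)), and for n ≥ 2 the recursion M(n+2) = z²·M(n) + (a² + 2 + a⁻²)·z^(n+2). Then M(n) = Λ̃(n, n+2) for every n ≥ 2; that is, M(n) = ⌈n/2⌉·a²·z^n + a·z^(n+1) + n·z^n + a⁻¹·z^(n+1) + ⌊n/2⌋·a⁻²·z^n. (This encodes the main Theorem of the paper for minimal rational tangles: the minimal tangle 21^(n−2)2 in standard format has n twist sites and n+2 crossings; smoothing its last singleton twist site yields via the truncated skein relation the stated recursion, whose solution shows that a rational knot or link in standard format with n twist sites and c crossings has Λ̃ = ⌈n/2⌉a²z^(c−2) + az^(c−1) + nz^(c−2) + a⁻¹z^(c−1) + ⌊n/2⌋a⁻²z^(c−2).) -/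
open Polynomial LaurentPolynomial

theorem eq_of_two_step_recursion {α : Type*} {f : ℕ → α → α} {u v : ℕ → α} {k : ℕ}
    (hu : ∀ n, k ≤ n → u (n + 2) = f n (u n)) (hv : ∀ n, k ≤ n → v (n + 2) = f n (v n))
    (h₀ : u k = v k) (h₁ : u (k + 1) = v (k + 1)) {n : ℕ} (hn : k ≤ n) : u n = v n := by
  suffices consecutive : u n = v n ∧ u (n + 1) = v (n + 1) from consecutive.1
  induction n, hn using Nat.le_induction with
  | base => exact ⟨h₀, h₁⟩
  | succ n hn ih => exact ⟨ih.2, by rw [hu n hn, hv n hn, ih.1]⟩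

theorem lamTilde_add_crossings (n k : ℕ) {c : ℕ} (hc : 2 ≤ c) :
    LamTilde n (c + k) = X ^ k * LamTilde n c := by
  have hsub_two : c + k - 2 = k + (c - 2) := by omega
  have hsub_one : c + k - 1 = k + (c - 1) := by omega
  simp only [LamTilde, hsub_two, hsub_one, pow_add]
  ring

theorem lamTilde_add_two_twist_sites (n c : ℕ) :
    LamTilde (n + 2) c =
      LamTilde n c + Polynomial.C (T 2 + 2 + T (-2) : LaurentPolynomial ℤ) * X ^ (c - 2) := by
  have hceil : (n + 2 + 1) / 2 = (n + 1) / 2 + 1 := by omega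
  have hfloor : (n + 2) / 2 = n / 2 + 1 := by omega
  simp only [LamTilde, hceil, hfloor, Nat.cast_add, Nat.cast_one, Nat.cast_ofNat, map_add, map_mul,
    map_one]
  ring

theorem lamTilde_add_two_add_two (n : ℕ) {c : ℕ} (hc : 2 ≤ c) :
    LamTilde (n + 2) (c + 2) =
      X ^ 2 * LamTilde n c + Polynomial.C (T 2 + 2 + T (-2) : LaurentPolynomial ℤ) * X ^ c := by
  rw [lamTilde_add_two_twist_sites, lamTilde_add_crossings n 2 hc, Nat.add_sub_cancel]

/-- The main theorem for minimal rational tangles: any sequence `M` satisfying the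
figure-eight and `N(212)` initial data together with the skein recursion
`M(n+2) = z²·M(n) + (a² + 2 + a⁻²)·z^(n+2)` coincides with `Λ̃(n, n+2)` for all `n ≥ 2`. -/
theorem minimal_tangle_main (M : ℕ → Polynomial (LaurentPolynomial ℤ))
    (h2 : M 2 = LamTilde 2 4) (h3 : M 3 = LamTilde 3 5)
    (hrec : ∀ n, 2 ≤ n →
      M (n + 2) = X ^ 2 * M n + Polynomial.C (T 2 + 2 + T (-2) : LaurentPolynomial ℤ) * X ^ (n + 2)) :
    ∀ n, 2 ≤ n → M n = LamTilde n (n + 2) := by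
  intro n hn
  refine eq_of_two_step_recursion (v := fun n => LamTilde n (n + 2))
    (f := fun n p => X ^ 2 * p + Polynomial.C (T 2 + 2 + T (-2)) * X ^ (n + 2)) hrec ?_ h2 h3 hn
  exact fun n _ => lamTilde_add_two_add_two n (Nat.le_add_left 2 n)
end
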